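/- arXiv:1811.00049 — 3 statements merged into one kernel-verified Lean document; each statement's English description precedes it below -/
import Mathlib

section
/- Let L₀ ≤ μ_{q^n+1}, L₁ ≤ S_ℓ × C_m and L̄ ≤ M_ℓ be subgroups satisfying ρ̄(L̄) = L₀^m (where L₀^m := {ξ^m : ξ ∈ L₀}), L̄ ∩ S_ℓ = π(L₁), and ρ(L₁) = L₀ ∩ μ_m. Assume moreover that L₁ ∩ C_m = {diag(1,1,ξ) : ξ ∈ L₀ ∩ μ_m}. Then there exists a subgroup L ≤ G such that ρ(L) = L₀, L ∩ (S_ℓ × C_m) = L₁, and π(L) = L̄. -/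
/-!
Block diagonal matrices identify `G` with a set of pairs `(A, ξ)` in `GL₂(E) × Eˣ` such that
`det A = ξ ^ m`, the maps `π` and `ρ` becoming the two projections. Take for `L` the fibre product
`{(A, ξ) | A ∈ L̄, ξ ∈ L₀, det A = ξ ^ m}`: since `L̄` and `L₀` have the same image under `det` and
`ξ ↦ ξ ^ m`, both projections of `L` are onto. The part of `L` over `ξ ^ m = 1` is the product
`(L̄ ∩ ker det) × (L₀ ∩ μ_m)`. A subgroup of a direct product that contains its own second
projection is the product of its projections, so the assumption on `L₁ ∩ C_m` makes `L₁` that same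
product.
-/

open Matrix

/-- The map `ρ` extracting the `(3,3)` entry of a matrix in `G`. -/
def rhoFun {E : Type*} [Field E] (M : GL (Fin 3) E) : E :=
  (M : Matrix (Fin 3) (Fin 3) E) 2 2

/-- The map `π`, sending `M = α_{a,c,ξ}` to `M · diag(1,1,ξ)⁻¹`,
i.e. replacing the `(3,3)` entry by `1`. -/
def piMat {E : Type*} [Field E] (M : GL (Fin 3) E) : Matrix (Fin 3) (Fin 3) E :=
  (M : Matrix (Fin 3) (Fin 3) E) *
    Matrix.diagonal ![1, 1, ((M : Matrix (Fin 3) (Fin 3) E) 2 2)⁻¹]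

/-- The carrier of `G = Aut(K_n)` as a set of invertible matrices. -/
def GSet (q n m : ℕ) {E : Type*} [Field E] (F : Subfield E) : Set (GL (Fin 3) E) :=
  {M | ∃ a c ξ : E, a ∈ F ∧ c ∈ F ∧ a ^ (q + 1) - c ^ (q + 1) = 1 ∧
    ξ ^ (q ^ n + 1) = 1 ∧
    (M : Matrix (Fin 3) (Fin 3) E)
      = !![a, c ^ q * ξ ^ m, 0; c, a ^ q * ξ ^ m, 0; 0, 0, ξ]}

/-- The carrier of `S_ℓ ≅ SL(2,q)`, as a set of matrices. -/
def SMat (q : ℕ) {E : Type*} [Field E] (F : Subfield E) : Set (Matrix (Fin 3) (Fin 3) E) :=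
  {A | ∃ a c : E, a ∈ F ∧ c ∈ F ∧ a ^ (q + 1) - c ^ (q + 1) = 1 ∧
    A = !![a, c ^ q, 0; c, a ^ q, 0; 0, 0, 1]}

/-- The carrier of `S_ℓ × C_m = {α_{a,c,ξ} ∈ G : ξ^m = 1}`. -/
def SCmSet (q n m : ℕ) {E : Type*} [Field E] (F : Subfield E) : Set (GL (Fin 3) E) :=
  {M | M ∈ GSet q n m F ∧ rhoFun M ^ m = 1}

/-- The carrier of `C_m = ker π = {diag(1,1,ξ) : ξ^m = 1}`. -/
def CmSet (m : ℕ) {E : Type*} [Field E] : Set (GL (Fin 3) E) :=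
  {M | ∃ ξ : E, ξ ^ m = 1 ∧
    (M : Matrix (Fin 3) (Fin 3) E) = Matrix.diagonal ![1, 1, ξ]}

/-- The set `μ_k` of `k`-th roots of unity in `E`. -/
def muSet (k : ℕ) (E : Type*) [Field E] : Set E := {ξ | ξ ^ k = 1}

section FiberProduct

variable {A B C : Type*} [Group A] [Group B] [Group C]

/-- The fibre product of the subgroups `H` and `K` over `f` and `g`, as a subgroup of `A × B`. It
models the subgroup of `G` with prescribed images under `π` and `ρ`. -/
def fiberProd (f : A →* C) (g : B →* C) (H : Subgroup A) (K : Subgroup B) : Subgroup (A × B) :=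
  H.prod K ⊓ (f.comp (.fst A B)).eqLocus (g.comp (.snd A B))

theorem mem_fiberProd {f : A →* C} {g : B →* C} {H : Subgroup A} {K : Subgroup B} {x : A × B} :
    x ∈ fiberProd f g H K ↔ (x.1 ∈ H ∧ x.2 ∈ K) ∧ f x.1 = g x.2 :=
  Iff.rfl

theorem map_fst_fiberProd {f : A →* C} {g : B →* C} {H : Subgroup A} {K : Subgroup B}
    (h : H.map f ≤ K.map g) : (fiberProd f g H K).map (.fst A B) = H := by
  refine le_antisymm (Subgroup.map_le_iff_le_comap.2 fun x hx ↦ hx.1.1) fun a ha ↦ ?_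
  obtain ⟨b, hb, hba⟩ := h (Subgroup.mem_map_of_mem f ha)
  exact ⟨(a, b), mem_fiberProd.2 ⟨⟨ha, hb⟩, hba.symm⟩, rfl⟩

theorem map_snd_fiberProd {f : A →* C} {g : B →* C} {H : Subgroup A} {K : Subgroup B}
    (h : K.map g ≤ H.map f) : (fiberProd f g H K).map (.snd A B) = K := by
  refine le_antisymm (Subgroup.map_le_iff_le_comap.2 fun x hx ↦ hx.1.2) fun b hb ↦ ?_
  obtain ⟨a, ha, hab⟩ := h (Subgroup.mem_map_of_mem g hb)
  exact ⟨(a, b), mem_fiberProd.2 ⟨⟨ha, hb⟩, hab⟩, rfl⟩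

theorem fiberProd_inf_ker (f : A →* C) (g : B →* C) (H : Subgroup A) (K : Subgroup B) :
    fiberProd f g H K ⊓ (g.comp (.snd A B)).ker = (H ⊓ f.ker).prod (K ⊓ g.ker) := by
  ext ⟨a, b⟩
  simp only [Subgroup.mem_inf, mem_fiberProd, Subgroup.mem_prod, MonoidHom.mem_ker,
    MonoidHom.comp_apply, MonoidHom.coe_snd]
  grind

theorem eq_prod_of_map_inr_map_snd_le {H : Subgroup (A × B)}
    (h : (H.map (.snd A B)).map (.inr A B) ≤ H) :
    H = (H.map (.fst A B)).prod (H.map (.snd A B)) := by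
  refine le_antisymm (Subgroup.le_prod_iff.2 ⟨le_rfl, le_rfl⟩) (Subgroup.prod_le_iff.2 ⟨?_, h⟩)
  rintro _ ⟨_, ⟨x, hx, rfl⟩, rfl⟩
  have hsnd : ((1, x.2) : A × B) ∈ H := h ⟨_, ⟨x, hx, rfl⟩, rfl⟩
  simpa [Prod.div_def] using! H.div_mem hx hsnd

end FiberProduct

theorem image_val_coe_subgroup_injective {M : Type*} [Monoid M] :
    Function.Injective fun H : Subgroup Mˣ ↦ Units.val '' (H : Set Mˣ) :=
  Units.val_injective.image_injective.comp SetLike.coe_injective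

theorem image_val_inter_muSet {E : Type*} [Field E] (K : Subgroup Eˣ) (m : ℕ) :
    Units.val '' (K : Set Eˣ) ∩ muSet m E
      = Units.val '' ((K ⊓ (powMonoidHom m).ker : Subgroup Eˣ) : Set Eˣ) := by
  rw [← Set.image_inter_preimage]
  congr 1
  ext ξ
  simp [muSet, Units.ext_iff, MonoidHom.mem_ker]

section BlockDiagonal

/-- The block diagonal matrix `diag(A, ξ)` attached to a pair `(A, ξ)`. It is multiplicative on all
pairs of matrices, so that `blockHom` needs no explicit inverses. -/
def blockMatHom (R : Type*) [Semiring R] :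
    Matrix (Fin 2) (Fin 2) R × R →* Matrix (Fin 3) (Fin 3) R where
  toFun x := !![x.1 0 0, x.1 0 1, 0; x.1 1 0, x.1 1 1, 0; 0, 0, x.2]
  map_one' := by
    ext i j
    fin_cases i <;> fin_cases j <;> simp
  map_mul' x y := by
    ext i j
    fin_cases i <;> fin_cases j <;> simp [Matrix.mul_apply, Fin.sum_univ_succ]

/-- The embedding `(A, ξ) ↦ diag(A, ξ)` of `GL₂ × GL₁` into `GL₃`, through which `G` and `π(G)` are
described by pairs. -/
def blockHom (R : Type*) [CommRing R] : GL (Fin 2) R × Rˣ →* GL (Fin 3) R :=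
  (Units.map (blockMatHom R)).comp MulEquiv.prodUnits.symm.toMonoidHom

variable {R : Type*} [CommRing R]

theorem coe_blockHom (A : GL (Fin 2) R) (ξ : Rˣ) :
    (blockHom R (A, ξ) : Matrix (Fin 3) (Fin 3) R)
      = !![A 0 0, A 0 1, 0; A 1 0, A 1 1, 0; 0, 0, (ξ : R)] :=
  rfl

theorem coe_blockHom_eq_iff {A : GL (Fin 2) R} {ξ : Rˣ} {a b c d ζ : R} :
    (blockHom R (A, ξ) : Matrix (Fin 3) (Fin 3) R) = !![a, b, 0; c, d, 0; 0, 0, ζ] ↔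
      (A : Matrix (Fin 2) (Fin 2) R) = !![a, b; c, d] ∧ (ξ : R) = ζ := by
  rw [coe_blockHom, Matrix.eta_fin_two (A : Matrix (Fin 2) (Fin 2) R)]
  simp [and_assoc]

theorem blockHom_injective : Function.Injective (blockHom R) := by
  rintro ⟨A, ξ⟩ ⟨B, η⟩ h
  obtain ⟨hA, hξ⟩ := coe_blockHom_eq_iff.1 (congrArg Units.val h)
  exact Prod.ext (Units.ext (hA.trans (Matrix.eta_fin_two _).symm)) (Units.ext hξ)

theorem blockHom_comp_inl_injective :
    Function.Injective ((blockHom R).comp (.inl (GL (Fin 2) R) Rˣ)) :=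
  blockHom_injective.comp (Prod.mk_left_injective 1)

theorem det_blockHom (A : GL (Fin 2) R) (ξ : Rˣ) :
    (blockHom R (A, ξ) : Matrix (Fin 3) (Fin 3) R).det
      = (A : Matrix (Fin 2) (Fin 2) R).det * ξ := by
  rw [coe_blockHom, Matrix.det_fin_three, Matrix.det_fin_two]
  simp only [of_apply, cons_val', cons_val_zero, cons_val_fin_one, cons_val_one, cons_val,
    mul_zero, sub_zero, add_zero, zero_mul]
  ring

theorem coe_blockHom_one_left (ξ : Rˣ) :
    (blockHom R (1, ξ) : Matrix (Fin 3) (Fin 3) R) = Matrix.diagonal ![1, 1, (ξ : R)] := by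
  rw [coe_blockHom]
  ext i j
  fin_cases i <;> fin_cases j <;> simp

theorem image_det_map_blockHom_inl (B : Subgroup (GL (Fin 2) R)) :
    (fun N : GL (Fin 3) R ↦ (N : Matrix (Fin 3) (Fin 3) R).det) ''
        (B.map ((blockHom R).comp (.inl _ _)) : Set (GL (Fin 3) R))
      = Units.val '' (B.map GeneralLinearGroup.det : Set Rˣ) := by
  simp [Set.image_image, det_blockHom]

theorem map_inr_le_of_image_diagonal_subset {K : Subgroup Rˣ} {H : Subgroup (GL (Fin 2) R × Rˣ)}
    (h : (fun ξ : Rˣ ↦ Matrix.diagonal ![1, 1, (ξ : R)]) '' (K : Set Rˣ)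
      ⊆ Units.val '' (H.map (blockHom R) : Set (GL (Fin 3) R))) :
    K.map (.inr _ _) ≤ H := by
  rintro _ ⟨ξ, hξ, rfl⟩
  obtain ⟨_, ⟨x, hx, rfl⟩, hxξ⟩ := h ⟨ξ, hξ, rfl⟩
  have hx_eq : x = (1, ξ) :=
    blockHom_injective (Units.ext (hxξ.trans (coe_blockHom_one_left ξ).symm))
  rwa [hx_eq] at hx

variable {E : Type*} [Field E]

theorem rhoFun_blockHom (x : GL (Fin 2) E × Eˣ) : rhoFun (blockHom E x) = x.2 :=
  rfl

theorem piMat_blockHom (x : GL (Fin 2) E × Eˣ) :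
    piMat (blockHom E x) = blockHom E (x.1, 1) := by
  rw [piMat, coe_blockHom, coe_blockHom]
  ext i j
  fin_cases i <;> fin_cases j <;> simp [Matrix.mul_diagonal]

theorem image_rhoFun_map_blockHom (H : Subgroup (GL (Fin 2) E × Eˣ)) :
    rhoFun '' (H.map (blockHom E) : Set (GL (Fin 3) E))
      = Units.val '' (H.map (.snd _ _) : Set Eˣ) := by
  simp [Set.image_image, rhoFun_blockHom]

theorem image_piMat_map_blockHom (H : Subgroup (GL (Fin 2) E × Eˣ)) :
    piMat '' (H.map (blockHom E) : Set (GL (Fin 3) E))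
      = Units.val ''
        ((H.map (.fst _ _)).map ((blockHom E).comp (.inl _ _)) : Set (GL (Fin 3) E)) := by
  simp [Set.image_image, piMat_blockHom]

end BlockDiagonal

section ParamBlock

variable {q n m : ℕ} {E : Type*} [Field E] {F : Subfield E}

/-- The upper left `2 × 2` blocks of the elements `α_{a,c,ξ}` of `G`; the factor `ξ ^ m` is written
as the determinant of the block, which makes the set independent of `ξ`, `m` and `n`. -/
def paramBlockSet (q : ℕ) (F : Subfield E) : Set (GL (Fin 2) E) :=
  {A | ∃ a c : E, a ∈ F ∧ c ∈ F ∧ a ^ (q + 1) - c ^ (q + 1) = 1 ∧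
    (A : Matrix (Fin 2) (Fin 2) E)
      = !![a, c ^ q * (A : Matrix (Fin 2) (Fin 2) E).det;
           c, a ^ q * (A : Matrix (Fin 2) (Fin 2) E).det]}

theorem det_paramBlock {R : Type*} [CommRing R] {a c : R} (h : a ^ (q + 1) - c ^ (q + 1) = 1)
    (d : R) : !![a, c ^ q * d; c, a ^ q * d].det = d := by
  rw [Matrix.det_fin_two_of]
  linear_combination d * h

theorem mem_paramBlockSet_and_det_eq_iff {A : GL (Fin 2) E} {d : E} :
    A ∈ paramBlockSet q F ∧ (A : Matrix (Fin 2) (Fin 2) E).det = d ↔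
      ∃ a c : E, a ∈ F ∧ c ∈ F ∧ a ^ (q + 1) - c ^ (q + 1) = 1 ∧
        (A : Matrix (Fin 2) (Fin 2) E) = !![a, c ^ q * d; c, a ^ q * d] := by
  constructor
  · rintro ⟨hA, rfl⟩
    exact hA
  · rintro ⟨a, c, ha, hc, hac, hA⟩
    have hdet : (A : Matrix (Fin 2) (Fin 2) E).det = d := by rw [hA, det_paramBlock hac]
    exact ⟨⟨a, c, ha, hc, hac, by rwa [hdet]⟩, hdet⟩

theorem blockHom_mem_GSet_iff {A : GL (Fin 2) E} {ξ : Eˣ} :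
    blockHom E (A, ξ) ∈ GSet q n m F ↔
      A ∈ paramBlockSet q F ∧ (A : Matrix (Fin 2) (Fin 2) E).det = (ξ : E) ^ m ∧
        (ξ : E) ^ (q ^ n + 1) = 1 := by
  rw [← and_assoc, mem_paramBlockSet_and_det_eq_iff]
  simp only [GSet, Set.mem_ofPred_eq, coe_blockHom_eq_iff]
  constructor
  · rintro ⟨a, c, _, ha, hc, hac, hξ, hA, rfl⟩
    exact ⟨⟨a, c, ha, hc, hac, hA⟩, hξ⟩
  · rintro ⟨⟨a, c, ha, hc, hac, hA⟩, hξ⟩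
    exact ⟨a, c, ξ, ha, hc, hac, hξ, hA, rfl⟩

theorem coe_blockHom_one_right_mem_SMat_iff {A : GL (Fin 2) E} :
    (blockHom E (A, 1) : Matrix (Fin 3) (Fin 3) E) ∈ SMat q F ↔
      A ∈ paramBlockSet q F ∧ (A : Matrix (Fin 2) (Fin 2) E).det = 1 := by
  rw [mem_paramBlockSet_and_det_eq_iff]
  simp only [SMat, Set.mem_ofPred_eq, coe_blockHom_eq_iff, Units.val_one, and_true, mul_one]

theorem GSet_subset_range_blockHom :
    GSet q n m F ⊆ ((blockHom E).range : Set (GL (Fin 3) E)) := by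
  rintro M ⟨a, c, ξ, -, -, hac, hξ, hM⟩
  have hξ0 : ξ ≠ 0 := by
    rintro rfl
    simp at hξ
  have hdet : !![a, c ^ q * ξ ^ m; c, a ^ q * ξ ^ m].det ≠ 0 := by
    rw [det_paramBlock hac]
    exact pow_ne_zero m hξ0
  refine ⟨(.mkOfDetNeZero _ hdet, .mk0 ξ hξ0), Units.ext ?_⟩
  rw [hM, coe_blockHom_eq_iff]
  exact ⟨rfl, rfl⟩

theorem exists_blockHom_one_right_eq {N : GL (Fin 3) E}
    (hN : ∃ M ∈ GSet q n m F, (N : Matrix (Fin 3) (Fin 3) E) = piMat M) :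
    ∃ A ∈ paramBlockSet q F, blockHom E (A, 1) = N := by
  obtain ⟨M, hM, hNM⟩ := hN
  obtain ⟨⟨A, ξ⟩, rfl⟩ := GSet_subset_range_blockHom hM
  exact ⟨A, (blockHom_mem_GSet_iff.1 hM).1, Units.ext (by rw [hNM, piMat_blockHom])⟩

theorem exists_map_blockHom_inl_eq {Lb : Subgroup (GL (Fin 3) E)}
    (hLb : ∀ N ∈ Lb, ∃ M ∈ GSet q n m F, (N : Matrix (Fin 3) (Fin 3) E) = piMat M) :
    ∃ B : Subgroup (GL (Fin 2) E), (B : Set (GL (Fin 2) E)) ⊆ paramBlockSet q F ∧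
      B.map ((blockHom E).comp (.inl _ _)) = Lb := by
  refine ⟨Lb.comap ((blockHom E).comp (.inl _ _)), fun A hA ↦ ?_,
    Subgroup.map_comap_eq_self fun N hN ↦ ?_⟩
  · obtain ⟨A', hA', hAA'⟩ := exists_blockHom_one_right_eq (hLb _ hA)
    have hA_eq : A' = A := congrArg Prod.fst (blockHom_injective hAA')
    exact hA_eq ▸ hA'
  · obtain ⟨A, -, hAN⟩ := exists_blockHom_one_right_eq (hLb N hN)
    exact ⟨A, hAN⟩

theorem map_blockHom_inter_SCmSet {H : Subgroup (GL (Fin 2) E × Eˣ)}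
    (hH : (H.map (blockHom E) : Set (GL (Fin 3) E)) ⊆ GSet q n m F) :
    (H.map (blockHom E) : Set (GL (Fin 3) E)) ∩ SCmSet q n m F
      = ((H ⊓ ((powMonoidHom m).comp (.snd _ _)).ker).map (blockHom E) : Set (GL (Fin 3) E)) := by
  have hker : ∀ x : GL (Fin 2) E × Eˣ,
      rhoFun (blockHom E x) ^ m = 1 ↔ x ∈ ((powMonoidHom m).comp (.snd (GL (Fin 2) E) Eˣ)).ker := by
    simp [rhoFun_blockHom, MonoidHom.mem_ker, Units.ext_iff]
  ext M
  constructor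
  · rintro ⟨⟨x, hx, rfl⟩, -, hρ⟩
    exact ⟨x, ⟨hx, (hker x).1 hρ⟩, rfl⟩
  · rintro ⟨x, ⟨hx, hxm⟩, rfl⟩
    exact ⟨⟨x, hx, rfl⟩, hH ⟨x, hx, rfl⟩, (hker x).2 hxm⟩

theorem image_val_map_blockHom_inl_inter_SMat {B : Subgroup (GL (Fin 2) E)}
    (hB : (B : Set (GL (Fin 2) E)) ⊆ paramBlockSet q F) :
    Units.val '' (B.map ((blockHom E).comp (.inl _ _)) : Set (GL (Fin 3) E)) ∩ SMat q F
      = Units.val '' ((B ⊓ GeneralLinearGroup.det.ker).map ((blockHom E).comp (.inl _ _)) :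
          Set (GL (Fin 3) E)) := by
  have hker : ∀ A ∈ B, (blockHom E (A, 1) : Matrix (Fin 3) (Fin 3) E) ∈ SMat q F ↔
      A ∈ GeneralLinearGroup.det.ker := fun A hA ↦ by
    simp [coe_blockHom_one_right_mem_SMat_iff, hB hA, MonoidHom.mem_ker, Units.ext_iff]
  ext M
  constructor
  · rintro ⟨⟨_, ⟨A, hA, rfl⟩, rfl⟩, hS⟩
    exact ⟨_, ⟨A, ⟨hA, (hker A hA).1 hS⟩, rfl⟩, rfl⟩
  · rintro ⟨_, ⟨A, ⟨hA, hdet⟩, rfl⟩, rfl⟩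
    exact ⟨⟨_, ⟨A, hA, rfl⟩, rfl⟩, (hker A hA).2 hdet⟩

theorem map_blockHom_fiberProd_subset_GSet {B : Subgroup (GL (Fin 2) E)} {L₀ : Subgroup Eˣ}
    (hB : (B : Set (GL (Fin 2) E)) ⊆ paramBlockSet q F)
    (hL₀ : ∀ ξ ∈ L₀, (ξ : E) ^ (q ^ n + 1) = 1) :
    ((fiberProd GeneralLinearGroup.det (powMonoidHom m) B L₀).map (blockHom E) :
      Set (GL (Fin 3) E)) ⊆ GSet q n m F := by
  rintro _ ⟨⟨A, ξ⟩, ⟨⟨hA, hξ⟩, hdet⟩, rfl⟩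
  exact blockHom_mem_GSet_iff.2 ⟨hB hA, congrArg Units.val hdet, hL₀ ξ hξ⟩

end ParamBlock

theorem stmt1_general (n q m : ℕ) {E : Type*} [Field E] (F : Subfield E)
    (L₀ : Subgroup Eˣ) (hL₀ : ∀ ξ ∈ L₀, (ξ : E) ^ (q ^ n + 1) = 1)
    (L₁ : Subgroup (GL (Fin 3) E))
    (hL₁ : (L₁ : Set (GL (Fin 3) E)) ⊆ SCmSet q n m F)
    (Lb : Subgroup (GL (Fin 3) E))
    (hLb : ∀ N ∈ Lb, ∃ M ∈ GSet q n m F, (N : Matrix (Fin 3) (Fin 3) E) = piMat M)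
    (h1 : (fun N : GL (Fin 3) E => (N : Matrix (Fin 3) (Fin 3) E).det)
          '' (Lb : Set (GL (Fin 3) E))
        = (fun ξ : Eˣ => (ξ : E) ^ m) '' (L₀ : Set Eˣ))
    (h2 : ((fun N : GL (Fin 3) E => (N : Matrix (Fin 3) (Fin 3) E))
          '' (Lb : Set (GL (Fin 3) E))) ∩ SMat q F
        = piMat '' (L₁ : Set (GL (Fin 3) E)))
    (h3 : rhoFun '' (L₁ : Set (GL (Fin 3) E))
        = (Units.val '' (L₀ : Set Eˣ)) ∩ muSet m E)
    (h4 : (fun N : GL (Fin 3) E => (N : Matrix (Fin 3) (Fin 3) E))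
          '' ((L₁ : Set (GL (Fin 3) E)) ∩ CmSet m)
        = (fun ξ : Eˣ => Matrix.diagonal ![1, 1, (ξ : E)])
          '' {ξ ∈ (L₀ : Set Eˣ) | (ξ : E) ∈ muSet m E}) :
    ∃ L : Subgroup (GL (Fin 3) E),
      (L : Set (GL (Fin 3) E)) ⊆ GSet q n m F ∧
      rhoFun '' (L : Set (GL (Fin 3) E)) = Units.val '' (L₀ : Set Eˣ) ∧
      (L : Set (GL (Fin 3) E)) ∩ SCmSet q n m F = (L₁ : Set (GL (Fin 3) E)) ∧
      piMat '' (L : Set (GL (Fin 3) E))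
        = (fun N : GL (Fin 3) E => (N : Matrix (Fin 3) (Fin 3) E))
          '' (Lb : Set (GL (Fin 3) E)) := by
  obtain ⟨H, rfl⟩ : ∃ H : Subgroup _, H.map (blockHom E) = L₁ :=
    ⟨_, Subgroup.map_comap_eq_self fun M hM ↦ GSet_subset_range_blockHom (hL₁ hM).1⟩
  obtain ⟨B, hB, rfl⟩ := exists_map_blockHom_inl_eq hLb
  have hdet : B.map GeneralLinearGroup.det = L₀.map (powMonoidHom m) := by
    rw [image_det_map_blockHom_inl] at h1
    exact image_val_coe_subgroup_injective (h1.trans (by simp [Set.image_image]))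
  have hfst : B ⊓ GeneralLinearGroup.det.ker = H.map (.fst _ _) := by
    rw [image_val_map_blockHom_inl_inter_SMat hB, image_piMat_map_blockHom] at h2
    exact Subgroup.map_injective blockHom_comp_inl_injective
      (image_val_coe_subgroup_injective h2)
  have hsnd : H.map (.snd _ _) = L₀ ⊓ (powMonoidHom m).ker := by
    rw [image_rhoFun_map_blockHom, image_val_inter_muSet] at h3
    exact image_val_coe_subgroup_injective h3
  have hinr : (H.map (.snd _ _)).map (.inr _ _) ≤ H := by
    rw [hsnd]
    refine map_inr_le_of_image_diagonal_subset ?_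
    rintro _ ⟨ξ, ⟨hξ, hξm⟩, rfl⟩
    exact Set.image_mono Set.inter_subset_left
      (h4.ge ⟨ξ, ⟨hξ, congrArg Units.val hξm⟩, rfl⟩)
  have hG := map_blockHom_fiberProd_subset_GSet (m := m) hB hL₀
  refine ⟨_, hG, ?_, ?_, ?_⟩
  · rw [image_rhoFun_map_blockHom, map_snd_fiberProd hdet.ge]
  · rw [map_blockHom_inter_SCmSet hG, fiberProd_inf_ker, hfst, ← hsnd,
      ← eq_prod_of_map_inr_map_snd_le hinr]
  · rw [image_piMat_map_blockHom, map_fst_fiberProd hdet.le]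

theorem stmt1 (p h n q m : ℕ) (hp : p.Prime) (hh : 1 ≤ h) (hq : q = p ^ h)
    (hn1 : 1 ≤ n) (hodd : Odd n) (hm : m * (q + 1) = q ^ n + 1)
    {E : Type*} [Field E] [Fintype E] (hE : Fintype.card E = q ^ (2 * n))
    (F : Subfield E) (hF : Nat.card F = q ^ 2)
    (L₀ : Subgroup Eˣ) (hL₀ : ∀ ξ ∈ L₀, (ξ : E) ^ (q ^ n + 1) = 1)
    (L₁ : Subgroup (GL (Fin 3) E))
    (hL₁ : (L₁ : Set (GL (Fin 3) E)) ⊆ SCmSet q n m F)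
    (Lb : Subgroup (GL (Fin 3) E))
    (hLb : ∀ N ∈ Lb, ∃ M ∈ GSet q n m F, (N : Matrix (Fin 3) (Fin 3) E) = piMat M)
    (h1 : (fun N : GL (Fin 3) E => (N : Matrix (Fin 3) (Fin 3) E).det)
          '' (Lb : Set (GL (Fin 3) E))
        = (fun ξ : Eˣ => (ξ : E) ^ m) '' (L₀ : Set Eˣ))
    (h2 : ((fun N : GL (Fin 3) E => (N : Matrix (Fin 3) (Fin 3) E))
          '' (Lb : Set (GL (Fin 3) E))) ∩ SMat q F
        = piMat '' (L₁ : Set (GL (Fin 3) E)))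
    (h3 : rhoFun '' (L₁ : Set (GL (Fin 3) E))
        = (Units.val '' (L₀ : Set Eˣ)) ∩ muSet m E)
    (h4 : (fun N : GL (Fin 3) E => (N : Matrix (Fin 3) (Fin 3) E))
          '' ((L₁ : Set (GL (Fin 3) E)) ∩ CmSet m)
        = (fun ξ : Eˣ => Matrix.diagonal ![1, 1, (ξ : E)])
          '' {ξ ∈ (L₀ : Set Eˣ) | (ξ : E) ∈ muSet m E}) :
    ∃ L : Subgroup (GL (Fin 3) E),
      (L : Set (GL (Fin 3) E)) ⊆ GSet q n m F ∧
      rhoFun '' (L : Set (GL (Fin 3) E)) = Units.val '' (L₀ : Set Eˣ) ∧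
      (L : Set (GL (Fin 3) E)) ∩ SCmSet q n m F = (L₁ : Set (GL (Fin 3) E)) ∧
      piMat '' (L : Set (GL (Fin 3) E))
        = (fun N : GL (Fin 3) E => (N : Matrix (Fin 3) (Fin 3) E))
          '' (Lb : Set (GL (Fin 3) E)) := by
  exact stmt1_general n q m F L₀ hL₀ L₁ hL₁ Lb hLb h1 h2 h3 h4
end

section
/- Let L₀ ≤ μ_{q^n+1} be a subgroup of order r, and let s be the order of the subgroup L₀^m := {ξ^m : ξ ∈ L₀}. Then r = s·gcd(r,m). Moreover, for every subgroup L̄ ≤ M_ℓ satisfying ρ̄(L̄) = L₀^m there exists a subgroup L ≤ G such that π(L) = L̄, ρ(L) = L₀, and |L ∩ C_m| = gcd(r,m). -/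
/-!
The group `L` consists of the products `N · diag(1, 1, ξ)` with `N ∈ L̄`, `ξ ∈ L₀` and
`det N = ξ ^ m`: it is the fibre product of `L̄` and `L₀` over `L₀ ^ m`. Elements of `L̄` have the
third row and column of the identity, so they commute with every `diag(1, 1, ξ)`, and the
condition on determinants says exactly that the product lies in `G`. Both projections are onto
because `ρ̄(L̄) = L₀ ^ m`, and `L ∩ C_m` is the kernel of `ξ ↦ ξ ^ m` on the cyclic group `L₀`.
-/

open Matrix

section CyclicPower

variable {A : Type*} [CommGroup A]

lemma card_inf_ker_powMonoidHom (K : Subgroup A) [IsCyclic K] [Finite K] (m : ℕ) :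
    Nat.card (K ⊓ (powMonoidHom m : A →* A).ker : Subgroup A) = (Nat.card K).gcd m := by
  have hker : K ⊓ (powMonoidHom m : A →* A).ker =
      (powMonoidHom m : K →* K).ker.map K.subtype := by
    rw [inf_comm, ← Subgroup.subgroupOf_map_subtype]
    congr 1
    ext x
    simp [Subgroup.mem_subgroupOf, MonoidHom.mem_ker, Subtype.ext_iff]
  rw [hker, Subgroup.card_map_of_injective K.subtype_injective, IsCyclic.card_powMonoidHom_ker]

lemma card_eq_card_map_powMonoidHom_mul_gcd (K : Subgroup A) [IsCyclic K] [Finite K] (m : ℕ) :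
    Nat.card K = Nat.card (K.map (powMonoidHom m)) * (Nat.card K).gcd m := by
  rw [← card_inf_ker_powMonoidHom, inf_comm, ← Subgroup.subgroupOf_map_subtype,
    Subgroup.card_map_of_injective K.subtype_injective, ← MonoidHom.ker_domRestrict,
    ← MonoidHom.domRestrict_range, ← Subgroup.index_ker, Subgroup.index_mul_card]

end CyclicPower

section InternalFiberProduct

variable {Γ A B : Type*} [Group Γ] [Group A] [Group B]
  (f : Γ →* B) (g : A →* B) (d : A →* Γ) {H : Subgroup Γ} (K : Subgroup A)
  (hcomm : ∀ N ∈ H, ∀ ξ, Commute N (d ξ))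

/-- The fibre product of `H` and `K` over `f N = g ξ`, realised inside `Γ` as the subgroup of
products `N * d ξ`. -/
def internalFiberProduct : Subgroup Γ :=
  (((f.domRestrict H).comp (MonoidHom.fst H K)).eqLocus
    ((g.domRestrict K).comp (MonoidHom.snd H K))).map
    (H.subtype.noncommCoprod (d.domRestrict K) fun N ξ => hcomm N N.2 ξ)

variable {f g d K hcomm}

lemma mem_internalFiberProduct {x : Γ} :
    x ∈ internalFiberProduct f g d K hcomm ↔ ∃ N ∈ H, ∃ ξ ∈ K, f N = g ξ ∧ N * d ξ = x := by
  constructor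
  · rintro ⟨⟨N, ξ⟩, hfg, rfl⟩
    exact ⟨N, N.2, ξ, ξ.2, hfg, rfl⟩
  · rintro ⟨N, hN, ξ, hξ, hfg, rfl⟩
    exact ⟨(⟨N, hN⟩, ⟨ξ, hξ⟩), hfg, rfl⟩

lemma image_internalFiberProduct_eq_image_left {X : Type*} {φ ψ : Γ → X}
    (hφ : ∀ N ∈ H, ∀ ξ, φ (N * d ξ) = ψ N) (hle : H.map f ≤ K.map g) :
    φ '' (internalFiberProduct f g d K hcomm : Set Γ) = ψ '' (H : Set Γ) := by
  ext x
  constructor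
  · rintro ⟨_, hM, rfl⟩
    obtain ⟨N, hN, ξ, -, -, rfl⟩ := mem_internalFiberProduct.1 hM
    exact ⟨N, hN, (hφ N hN ξ).symm⟩
  · rintro ⟨N, hN, rfl⟩
    obtain ⟨ξ, hξ, hgf⟩ := hle (Subgroup.mem_map_of_mem f hN)
    exact ⟨_, mem_internalFiberProduct.2 ⟨N, hN, ξ, hξ, hgf.symm, rfl⟩, hφ N hN ξ⟩

lemma image_internalFiberProduct_eq_image_right {X : Type*} {φ : Γ → X} {ψ : A → X}
    (hφ : ∀ N ∈ H, ∀ ξ, φ (N * d ξ) = ψ ξ) (hle : K.map g ≤ H.map f) :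
    φ '' (internalFiberProduct f g d K hcomm : Set Γ) = ψ '' (K : Set A) := by
  ext x
  constructor
  · rintro ⟨_, hM, rfl⟩
    obtain ⟨N, hN, ξ, hξ, -, rfl⟩ := mem_internalFiberProduct.1 hM
    exact ⟨ξ, hξ, (hφ N hN ξ).symm⟩
  · rintro ⟨ξ, hξ, rfl⟩
    obtain ⟨N, hN, hfg⟩ := hle (Subgroup.mem_map_of_mem g hξ)
    exact ⟨_, mem_internalFiberProduct.2 ⟨N, hN, ξ, hξ, hfg, rfl⟩, hφ N hN ξ⟩

lemma internalFiberProduct_inf_map_ker (hd : Function.Injective d) (hdisj : Disjoint H d.range) :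
    internalFiberProduct f g d K hcomm ⊓ g.ker.map d = (K ⊓ g.ker).map d := by
  ext x
  constructor
  · rintro ⟨hx, ζ, hζ, rfl⟩
    obtain ⟨N, hN, ξ, hξ, -, hmul⟩ := mem_internalFiberProduct.1 hx
    have hNd : N = d (ζ * ξ⁻¹) := by rw [map_mul, map_inv, eq_mul_inv_iff_mul_eq, hmul]
    have hN1 : N = 1 := Subgroup.disjoint_def.1 hdisj hN ⟨_, hNd.symm⟩
    rw [hN1, one_mul] at hmul
    exact ⟨ζ, ⟨hd hmul ▸ hξ, hζ⟩, rfl⟩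
  · rintro ⟨ξ, ⟨hξ, hker⟩, rfl⟩
    refine ⟨mem_internalFiberProduct.2 ⟨1, H.one_mem, ξ, hξ, ?_, one_mul _⟩, ξ, hker, rfl⟩
    rw [map_one, MonoidHom.mem_ker.1 hker]

end InternalFiberProduct

/-- The matrix `N` agrees with the identity matrix on the `i`-th row and on the `i`-th column, which
is what makes it commute with the diagonal matrices that are trivial away from `i`. -/
def IsTrivialAt {ι R : Type*} [DecidableEq ι] [Zero R] [One R] (i : ι) (N : Matrix ι ι R) : Prop :=
  ∀ j, N i j = (1 : Matrix ι ι R) i j ∧ N j i = (1 : Matrix ι ι R) j i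

section DiagonalSingle

variable {ι R : Type*} [Fintype ι] [DecidableEq ι] [CommRing R]

/-- The embedding `ξ ↦ diag(1, …, ξ, …, 1)` of `Rˣ` into `GL ι R`, with `ξ` in position `i`. -/
def diagonalSingle (i : ι) : Rˣ →* GL ι R :=
  (Units.map (diagonalRingHom ι R : (ι → R) →* Matrix ι ι R)).comp
    (MulEquiv.piUnits.symm.toMonoidHom.comp (MonoidHom.mulSingle (fun _ => Rˣ) i))

@[simp]
lemma coe_diagonalSingle (i : ι) (ξ : Rˣ) :
    (diagonalSingle i ξ : Matrix ι ι R) = diagonal (Pi.mulSingle i (ξ : R)) :=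
  congrArg diagonal (funext fun j => Pi.apply_mulSingle (fun _ => Units.val) (fun _ => rfl) i ξ j)

lemma diagonalSingle_injective (i : ι) : Function.Injective (diagonalSingle i : Rˣ →* GL ι R) := by
  intro ξ ζ h
  simpa [Units.ext_iff] using congrArg (fun N : GL ι R => (N : Matrix ι ι R) i i) h

variable {i : ι} {N : GL ι R}

lemma IsTrivialAt.commute_diagonalSingle (hN : IsTrivialAt i (N : Matrix ι ι R)) (ξ : Rˣ) :
    Commute N (diagonalSingle i ξ) := by
  ext j k
  simp only [Units.val_mul, coe_diagonalSingle, mul_diagonal, diagonal_mul]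
  rcases eq_or_ne j i with hj | hj <;> rcases eq_or_ne k i with hk | hk
  · rw [hj, hk, mul_comm]
  · simp [hj, hk, hk.symm, (hN k).1]
  · simp [hj, hk, (hN j).2]
  · simp [hj, hk]

lemma IsTrivialAt.mul_diagonalSingle_apply (hN : IsTrivialAt i (N : Matrix ι ι R)) (ξ : Rˣ) :
    (N * diagonalSingle i ξ : GL ι R) i i = (ξ : R) := by
  simp [(hN i).1]

lemma disjoint_range_diagonalSingle {H : Subgroup (GL ι R)}
    (hH : ∀ N ∈ H, IsTrivialAt i (N : Matrix ι ι R)) :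
    Disjoint H (diagonalSingle i : Rˣ →* GL ι R).range := by
  rw [Subgroup.disjoint_def]
  rintro _ hN ⟨ξ, rfl⟩
  have hξ : ξ = 1 := Units.ext (by simpa using (hH _ hN i).1)
  rw [hξ, map_one]

end DiagonalSingle

lemma mulSingle_two {α : Type*} [One α] (x : α) : (Pi.mulSingle 2 x : Fin 3 → α) = ![1, 1, x] := by
  ext i
  fin_cases i <;> rfl

section GiuliettiKorchmaros

variable {E : Type*} [Field E] {q n m : ℕ} {F : Subfield E}

/-- A set containing `M_ℓ`: the matrices `α_{a,c,ξ} · diag(1, 1, ξ)⁻¹`, with the factor `ξ ^ m`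
recorded as the determinant, which is left arbitrary. -/
def MMat (q : ℕ) (F : Subfield E) : Set (Matrix (Fin 3) (Fin 3) E) :=
  {A | ∃ a c : E, a ∈ F ∧ c ∈ F ∧ a ^ (q + 1) - c ^ (q + 1) = 1 ∧
    A = !![a, c ^ q * A.det, 0; c, a ^ q * A.det, 0; 0, 0, 1]}

lemma piMat_mem_MMat {M : GL (Fin 3) E} (hM : M ∈ GSet q n m F) : piMat M ∈ MMat q F := by
  obtain ⟨a, c, ξ, ha, hc, hac, hξ, hM⟩ := hM
  have hξ0 : ξ ≠ 0 := by
    rintro rfl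
    simp at hξ
  have hpi : piMat M = !![a, c ^ q * ξ ^ m, 0; c, a ^ q * ξ ^ m, 0; 0, 0, 1] := by
    ext i j
    fin_cases i <;> fin_cases j <;> simp [piMat, hM, hξ0]
  have hdet : (piMat M).det = ξ ^ m := by
    simp only [hpi, det_fin_three, of_apply, cons_val]
    linear_combination ξ ^ m * hac
  exact ⟨a, c, ha, hc, hac, by rw [hdet, hpi]⟩

lemma isTrivialAt_of_mem_MMat {A : Matrix (Fin 3) (Fin 3) E} (hA : A ∈ MMat q F) :
    IsTrivialAt 2 A := by
  obtain ⟨a, c, -, -, -, hA⟩ := hA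
  intro j
  rw [hA]
  fin_cases j <;> simp [one_apply]

variable {N : GL (Fin 3) E}

lemma mul_diagonalSingle_mem_GSet (hN : (N : Matrix (Fin 3) (Fin 3) E) ∈ MMat q F) {ξ : Eˣ}
    (hξ : (ξ : E) ^ (q ^ n + 1) = 1) (hdet : (N : Matrix (Fin 3) (Fin 3) E).det = (ξ : E) ^ m) :
    N * diagonalSingle 2 ξ ∈ GSet q n m F := by
  obtain ⟨a, c, ha, hc, hac, hN⟩ := hN
  refine ⟨a, c, ξ, ha, hc, hac, hξ, ?_⟩
  rw [Units.val_mul, coe_diagonalSingle, mulSingle_two, hN, hdet]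
  ext i j
  fin_cases i <;> fin_cases j <;> simp

lemma piMat_mul_diagonalSingle (hN : IsTrivialAt 2 (N : Matrix (Fin 3) (Fin 3) E)) (ξ : Eˣ) :
    piMat (N * diagonalSingle 2 ξ) = (N : Matrix (Fin 3) (Fin 3) E) := by
  rw [piMat, hN.mul_diagonalSingle_apply, ← Units.val_inv_eq_inv_val, ← mulSingle_two,
    ← coe_diagonalSingle, ← Units.val_mul, map_inv, mul_inv_cancel_right]

lemma coe_map_ker_powMonoidHom_diagonalSingle (m : ℕ) :
    (((powMonoidHom m : Eˣ →* Eˣ).ker.map (diagonalSingle 2) : Subgroup (GL (Fin 3) E)) :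
      Set (GL (Fin 3) E)) = CmSet m := by
  ext M
  constructor
  · rintro ⟨ξ, hξ, rfl⟩
    exact ⟨ξ, congrArg Units.val hξ, by rw [coe_diagonalSingle, mulSingle_two]⟩
  · rintro ⟨x, hx, hM⟩
    have hx0 : x ≠ 0 := by
      rintro rfl
      exact M.det_ne_zero (by simp [hM, Fin.prod_univ_three])
    exact ⟨Units.mk0 x hx0, Units.ext (by simpa using hx), Units.ext (by simp [hM, mulSingle_two])⟩

end GiuliettiKorchmaros

theorem stmt2_general (q n m : ℕ) {E : Type*} [Field E] (F : Subfield E)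
    (L₀ : Subgroup Eˣ) (hL₀ : ∀ ξ ∈ L₀, (ξ : E) ^ (q ^ n + 1) = 1) :
    Nat.card L₀ = Nat.card (L₀.map (powMonoidHom m)) * (Nat.card L₀).gcd m ∧
    ∀ Lb : Subgroup (GL (Fin 3) E),
      (∀ N ∈ Lb, ∃ M ∈ GSet q n m F, (N : Matrix (Fin 3) (Fin 3) E) = piMat M) →
      ((fun N : GL (Fin 3) E => (N : Matrix (Fin 3) (Fin 3) E).det)
          '' (Lb : Set (GL (Fin 3) E))
        = (fun ξ : Eˣ => (ξ : E) ^ m) '' (L₀ : Set Eˣ)) →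
      ∃ L : Subgroup (GL (Fin 3) E),
        (L : Set (GL (Fin 3) E)) ⊆ GSet q n m F ∧
        piMat '' (L : Set (GL (Fin 3) E))
          = (fun N : GL (Fin 3) E => (N : Matrix (Fin 3) (Fin 3) E))
            '' (Lb : Set (GL (Fin 3) E)) ∧
        rhoFun '' (L : Set (GL (Fin 3) E)) = Units.val '' (L₀ : Set Eˣ) ∧
        Nat.card ((L : Set (GL (Fin 3) E)) ∩ CmSet m : Set (GL (Fin 3) E))
          = (Nat.card L₀).gcd m := by
  have hroots : L₀ ≤ rootsOfUnity (q ^ n + 1) E := fun ξ hξ => Units.ext (hL₀ ξ hξ)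
  have : Finite L₀ := Finite.of_injective _ (Subgroup.inclusion_injective hroots)
  refine ⟨card_eq_card_map_powMonoidHom_mul_gcd L₀ m, fun Lb hLb hdet => ?_⟩
  have hmem : ∀ N ∈ Lb, (N : Matrix (Fin 3) (Fin 3) E) ∈ MMat q F := fun N hN => by
    obtain ⟨M, hM, hNM⟩ := hLb N hN
    exact hNM ▸ piMat_mem_MMat hM
  have htriv := fun N hN => isTrivialAt_of_mem_MMat (hmem N hN)
  have hmap : Lb.map GeneralLinearGroup.det = L₀.map (powMonoidHom m) :=
    SetLike.coe_injective <| Units.val_injective.image_injective <| by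
      simpa [Set.image_image] using hdet
  let L := internalFiberProduct GeneralLinearGroup.det (powMonoidHom m) (diagonalSingle 2) L₀
    fun N hN => (htriv N hN).commute_diagonalSingle
  refine ⟨L, fun M hM => ?_, ?_, ?_, ?_⟩
  · obtain ⟨N, hN, ξ, hξ, hdetN, rfl⟩ := mem_internalFiberProduct.1 hM
    exact mul_diagonalSingle_mem_GSet (hmem N hN) (hL₀ ξ hξ) (congrArg Units.val hdetN)
  · exact image_internalFiberProduct_eq_image_left
      (fun N hN => piMat_mul_diagonalSingle (htriv N hN)) hmap.le
  · exact image_internalFiberProduct_eq_image_right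
      (fun N hN => (htriv N hN).mul_diagonalSingle_apply) hmap.ge
  · rw [← coe_map_ker_powMonoidHom_diagonalSingle, ← Subgroup.coe_inf,
      internalFiberProduct_inf_map_ker (diagonalSingle_injective 2)
        (disjoint_range_diagonalSingle htriv), ← card_inf_ker_powMonoidHom L₀ m]
    exact Subgroup.card_map_of_injective (diagonalSingle_injective 2)

theorem stmt2 (p h n q m r s : ℕ) (hp : p.Prime) (hh : 1 ≤ h) (hq : q = p ^ h)
    (hn1 : 1 ≤ n) (hodd : Odd n) (hm : m * (q + 1) = q ^ n + 1)
    {E : Type*} [Field E] [Fintype E] (hE : Fintype.card E = q ^ (2 * n))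
    (F : Subfield E) (hF : Nat.card F = q ^ 2)
    (L₀ : Subgroup Eˣ) (hL₀ : ∀ ξ ∈ L₀, (ξ : E) ^ (q ^ n + 1) = 1)
    (hr : Nat.card L₀ = r)
    (hs : Nat.card (L₀.map (powMonoidHom m)) = s) :
    r = s * Nat.gcd r m ∧
    ∀ Lb : Subgroup (GL (Fin 3) E),
      (∀ N ∈ Lb, ∃ M ∈ GSet q n m F, (N : Matrix (Fin 3) (Fin 3) E) = piMat M) →
      ((fun N : GL (Fin 3) E => (N : Matrix (Fin 3) (Fin 3) E).det)
          '' (Lb : Set (GL (Fin 3) E))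
        = (fun ξ : Eˣ => (ξ : E) ^ m) '' (L₀ : Set Eˣ)) →
      ∃ L : Subgroup (GL (Fin 3) E),
        (L : Set (GL (Fin 3) E)) ⊆ GSet q n m F ∧
        piMat '' (L : Set (GL (Fin 3) E))
          = (fun N : GL (Fin 3) E => (N : Matrix (Fin 3) (Fin 3) E))
            '' (Lb : Set (GL (Fin 3) E)) ∧
        rhoFun '' (L : Set (GL (Fin 3) E)) = Units.val '' (L₀ : Set Eˣ) ∧
        Nat.card ((L : Set (GL (Fin 3) E)) ∩ CmSet m : Set (GL (Fin 3) E))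
          = Nat.gcd r m := by
  subst hr hs
  exact stmt2_general q n m F L₀ hL₀
end

section
/- Let L̄ ≤ M_ℓ be a subgroup and set s := |ρ̄(L̄)|. Let L ≤ G be a subgroup with π(L) = L̄, and set L_m := L ∩ C_m. If gcd(s, m/|L_m|) = 1, then there exists a subgroup L̃ ≤ G such that π(L̃) = L̄, ρ(L̃) is the unique subgroup of μ_{q^n+1} of order s·|L_m|, and |L̃ ∩ C_m| = |L_m|. -/
/-!
An element of `G` is a product `N * diag(1,1,ξ)` of commuting factors with `N = π(g)` and
`ξ = ρ(g)`, subject only to `ξ ^ m = det N`: thus `G` is the fibre product of `det` on `π(G)` and of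
the `m`-th power map on roots of unity. The group `L̃` is the part of it over `L̄` with
`ξ ^ (s * l) = 1`, where `l = |L_m|` and `m = l * k`.

* It still covers `L̄`. As `gcd s k = 1`, there is an exponent `e ≡ 1 (mod s)` divisible by `k`, and
  replacing `ξ` by `ξ ^ e` moves it into the `s * l`-th roots of unity without changing `ξ ^ m`,
  which is an `s`-th root of unity.
* Its image under `ρ` is everything allowed: `ρ̄(L̄)` has order `s`, hence consists of all `s`-th
  roots of unity, so the `m`-th power of any `s * l`-th root of unity lies in it.
* It meets `C_m` in the `diag(1,1,ξ)` with the order of `ξ` dividing `gcd (l * k) (s * l) = l`, and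
  there are exactly `l` of these because the cyclic group `L_m` has order `l`.
-/

open Matrix

section FiberProduct

variable {Γ M : Type*} [Group Γ] [CommMonoid M]

/-- The fibre product of a homomorphism `d : Γ →* Mˣ` and the `m`-th power map of `Mˣ`, cut down to
the pairs whose second component is an `r`-th root of unity. With `d` the determinant on `L̄`, it
models the group of all `g ∈ G` with `π(g) ∈ L̄` and `ρ(g) ∈ μ_r`. -/
def powFiberProd (d : Γ →* Mˣ) (m r : ℕ) : Subgroup (Γ × Mˣ) :=
  ((powMonoidHom m).comp (MonoidHom.snd Γ Mˣ)).eqLocus (d.comp (MonoidHom.fst Γ Mˣ)) ⊓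
    (rootsOfUnity r M).comap (MonoidHom.snd Γ Mˣ)

theorem mem_powFiberProd {d : Γ →* Mˣ} {m r : ℕ} {x : Γ × Mˣ} :
    x ∈ powFiberProd d m r ↔ x.2 ^ m = d x.1 ∧ x.2 ∈ rootsOfUnity r M :=
  Iff.rfl

theorem exists_pow_eq_pow_and_pow_mul_eq_one {A : Type*} [Group A] {l k s : ℕ}
    (hsk : s.Coprime k) {u : A} (hu : u ^ (l * k * s) = 1) :
    ∃ v : A, v ^ (l * k) = u ^ (l * k) ∧ v ^ (s * l) = 1 := by
  obtain ⟨e, he_one, he_zero⟩ := Nat.chineseRemainder hsk 1 0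
  obtain ⟨f, rfl⟩ : k ∣ e := (Nat.modEq_zero_iff_dvd).1 he_zero
  refine ⟨u ^ (k * f), ?_, ?_⟩
  · rw [← pow_mul, pow_eq_pow_iff_modEq, mul_comm (k * f)]
    simpa using (he_one.mul_left' (l * k)).of_dvd (orderOf_dvd_of_pow_eq_one hu)
  · rw [← pow_mul, show k * f * (s * l) = l * k * s * f by ring, pow_mul, hu, one_pow]

theorem map_fst_powFiberProd_eq_top {d : Γ →* Mˣ} {l k s : ℕ} (hsk : s.Coprime k)
    (hd_pow : ∀ g, ∃ u, u ^ (l * k) = d g) (hd_range : d.range ≤ rootsOfUnity s M) :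
    (powFiberProd d (l * k) (s * l)).map (MonoidHom.fst Γ Mˣ) = ⊤ := by
  refine (Subgroup.eq_top_iff' _).2 fun g => ?_
  obtain ⟨u, hu⟩ := hd_pow g
  have hu_pow : u ^ (l * k * s) = 1 := by
    rw [pow_mul, hu]
    exact hd_range ⟨g, rfl⟩
  obtain ⟨v, hvu, hv⟩ := exists_pow_eq_pow_and_pow_mul_eq_one hsk hu_pow
  exact ⟨(g, v), ⟨hvu.trans hu, hv⟩, rfl⟩

theorem map_snd_powFiberProd {d : Γ →* Mˣ} {l k s : ℕ} (hd : rootsOfUnity s M ≤ d.range) :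
    (powFiberProd d (l * k) (s * l)).map (MonoidHom.snd Γ Mˣ) = rootsOfUnity (s * l) M := by
  apply le_antisymm
  · rintro _ ⟨x, hx, rfl⟩
    exact hx.2
  · intro u hu
    have hu_pow : u ^ (l * k) ∈ rootsOfUnity s M := by
      rw [mem_rootsOfUnity] at hu ⊢
      rw [← pow_mul, show l * k * s = s * l * k by ring, pow_mul, hu, one_pow]
    obtain ⟨g, hg⟩ := hd hu_pow
    exact ⟨(g, u), ⟨hg.symm, hu⟩, rfl⟩

theorem comap_inr_powFiberProd (d : Γ →* Mˣ) {l k s : ℕ} (hsk : s.Coprime k) :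
    (powFiberProd d (l * k) (s * l)).comap (MonoidHom.inr Γ Mˣ) = rootsOfUnity l M := by
  have hgcd : (l * k).gcd (s * l) = l := by
    rw [mul_comm l k, Nat.gcd_mul_right, hsk.symm.gcd_eq_one, one_mul]
  calc
    _ = rootsOfUnity (l * k) M ⊓ rootsOfUnity (s * l) M := by
      ext u
      simp [mem_powFiberProd, mem_rootsOfUnity]
    _ = rootsOfUnity l M := by rw [rootsOfUnity_inf_rootsOfUnity, hgcd]

end FiberProduct

section RootsOfUnity

variable {R : Type*} [CommRing R] [IsDomain R]

theorem finite_of_le_rootsOfUnity {m : ℕ} [NeZero m] {H : Subgroup Rˣ}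
    (hH : H ≤ rootsOfUnity m R) : Finite H :=
  Finite.of_injective _ (Subgroup.inclusion_injective hH)

theorem eq_rootsOfUnity_natCard (H : Subgroup Rˣ) [Finite H] :
    H = rootsOfUnity (Nat.card H) R :=
  have : NeZero (Nat.card H) := ⟨Nat.card_pos.ne'⟩
  Subgroup.eq_of_le_of_card_ge
    (fun u hu => congrArg Subtype.val (pow_card_eq_one' (x := (⟨u, hu⟩ : H))))
    (card_rootsOfUnity R _)

theorem exists_isPrimitiveRoot_natCard (H : Subgroup Rˣ) [Finite H] :
    ∃ ζ ∈ H, IsPrimitiveRoot ζ (Nat.card H) := by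
  obtain ⟨ζ, hζ⟩ := IsCyclic.exists_ofOrder_eq_natCard (α := H)
  exact ⟨ζ, ζ.2, hζ ▸ Subgroup.orderOf_coe ζ ▸ IsPrimitiveRoot.orderOf (ζ : Rˣ)⟩

end RootsOfUnity

section BlockMatrices

variable {E : Type*} [Field E]

/-- The embedding `ξ ↦ diag(1,1,ξ)` of `Eˣ` into `GL(3,E)`; it maps `μ_m` onto `C_m`. -/
def diagThird : Eˣ →* GL (Fin 3) E :=
  Units.map
    { toFun := fun x => Matrix.diagonal ![1, 1, x]
      map_one' := by ext i j; fin_cases i <;> fin_cases j <;> simp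
      map_mul' := fun x y => by ext i j; fin_cases i <;> fin_cases j <;> simp }

theorem coe_diagThird (u : Eˣ) :
    (diagThird u : Matrix (Fin 3) (Fin 3) E) = Matrix.diagonal ![1, 1, (u : E)] :=
  rfl

theorem rhoFun_diagThird (u : Eˣ) : rhoFun (diagThird u) = u := by
  simp [rhoFun, coe_diagThird]

theorem diagThird_injective : Function.Injective (diagThird : Eˣ → GL (Fin 3) E) := fun u v huv =>
  Units.ext (by rw [← rhoFun_diagThird u, huv, rhoFun_diagThird])

theorem CmSet_eq_image {m : ℕ} [NeZero m] :
    (CmSet m : Set (GL (Fin 3) E)) = diagThird '' (rootsOfUnity m E : Set Eˣ) := by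
  ext M
  constructor
  · rintro ⟨ξ, hξ, hM⟩
    exact ⟨rootsOfUnity.mkOfPowEq ξ hξ, SetLike.coe_mem _, Units.ext hM.symm⟩
  · rintro ⟨u, hu, rfl⟩
    exact ⟨u, (mem_rootsOfUnity' m u).1 hu, rfl⟩

theorem natCard_inter_CmSet {m : ℕ} [NeZero m] (L : Subgroup (GL (Fin 3) E)) :
    Nat.card ((L : Set (GL (Fin 3) E)) ∩ CmSet m : Set (GL (Fin 3) E))
      = Nat.card (L.comap diagThird ⊓ rootsOfUnity m E : Subgroup Eˣ) := by
  rw [CmSet_eq_image, ← Set.image_preimage_inter, Nat.card_image_of_injective diagThird_injective]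
  rfl

theorem natCard_inter_CmSet_dvd_and_exists_isPrimitiveRoot {m : ℕ} (hm : m ≠ 0)
    (L : Subgroup (GL (Fin 3) E)) :
    Nat.card ((L : Set (GL (Fin 3) E)) ∩ CmSet m : Set (GL (Fin 3) E)) ∣ m ∧
      ∃ ζ : Eˣ, IsPrimitiveRoot ζ
        (Nat.card ((L : Set (GL (Fin 3) E)) ∩ CmSet m : Set (GL (Fin 3) E))) := by
  have : NeZero m := ⟨hm⟩
  have hle : L.comap diagThird ⊓ rootsOfUnity m E ≤ rootsOfUnity m E := inf_le_right
  have := finite_of_le_rootsOfUnity hle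
  obtain ⟨ζ, hζ_mem, hζ⟩ := exists_isPrimitiveRoot_natCard (L.comap diagThird ⊓ rootsOfUnity m E)
  rw [natCard_inter_CmSet]
  exact ⟨hζ.dvd_of_pow_eq_one m (hle hζ_mem), ζ, hζ⟩

/-- `N` has the block form `diag(B, 1)` with `B` of size two, as the elements of `M_ℓ = π(G)` do. -/
def IsBlockOne (N : GL (Fin 3) E) : Prop :=
  ∃ a b c d : E, (N : Matrix (Fin 3) (Fin 3) E) = !![a, b, 0; c, d, 0; 0, 0, 1]

theorem IsBlockOne.commute_diagThird {N : GL (Fin 3) E} (hN : IsBlockOne N) (u : Eˣ) :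
    Commute N (diagThird u) := by
  obtain ⟨a, b, c, d, hN⟩ := hN
  apply Units.ext
  rw [Units.val_mul, Units.val_mul, hN, coe_diagThird]
  ext i j
  fin_cases i <;> fin_cases j <;> simp

theorem IsBlockOne.rhoFun_mul_diagThird {N : GL (Fin 3) E} (hN : IsBlockOne N) (u : Eˣ) :
    rhoFun (N * diagThird u) = u := by
  obtain ⟨a, b, c, d, hN⟩ := hN
  simp [rhoFun, hN, coe_diagThird]

theorem piMat_eq_mul_diagThird {M : GL (Fin 3) E} {u : Eˣ} (hu : rhoFun M = u) :
    piMat M = (M * diagThird u⁻¹ : GL (Fin 3) E) := by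
  rw [Units.val_mul, coe_diagThird, Units.val_inv_eq_inv_val, ← hu]
  rfl

theorem IsBlockOne.piMat_mul_diagThird {N : GL (Fin 3) E} (hN : IsBlockOne N) (u : Eˣ) :
    piMat (N * diagThird u) = N := by
  rw [piMat_eq_mul_diagThird (hN.rhoFun_mul_diagThird u), map_inv, mul_inv_cancel_right]

end BlockMatrices

section BlockProduct

variable {E : Type*} [Field E] {Lb : Subgroup (GL (Fin 3) E)}

/-- The homomorphism `(N, ξ) ↦ N * diag(1,1,ξ)`, which is inverse to `g ↦ (π(g), ρ(g))`. -/
def blockMulDiag (hLb : ∀ N ∈ Lb, IsBlockOne N) : Lb × Eˣ →* GL (Fin 3) E :=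
  Lb.subtype.noncommCoprod diagThird fun N u => (hLb N N.2).commute_diagThird u

variable (hLb : ∀ N ∈ Lb, IsBlockOne N)

theorem piMat_blockMulDiag (x : Lb × Eˣ) :
    piMat (blockMulDiag hLb x) = ((x.1 : GL (Fin 3) E) : Matrix (Fin 3) (Fin 3) E) :=
  (hLb x.1 x.1.2).piMat_mul_diagThird x.2

theorem rhoFun_blockMulDiag (x : Lb × Eˣ) : rhoFun (blockMulDiag hLb x) = x.2 :=
  (hLb x.1 x.1.2).rhoFun_mul_diagThird x.2

theorem blockMulDiag_injective : Function.Injective (blockMulDiag hLb) := fun x y hxy =>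
  Prod.ext
    (Subtype.ext <| Units.ext <| by rw [← piMat_blockMulDiag hLb, hxy, piMat_blockMulDiag])
    (Units.ext <| by rw [← rhoFun_blockMulDiag hLb, hxy, rhoFun_blockMulDiag])

theorem piMat_image_map_blockMulDiag (P : Subgroup (Lb × Eˣ)) :
    piMat '' (P.map (blockMulDiag hLb) : Set (GL (Fin 3) E))
      = (fun N : GL (Fin 3) E => (N : Matrix (Fin 3) (Fin 3) E))
        '' ((P.map (MonoidHom.fst Lb Eˣ)).map Lb.subtype : Set (GL (Fin 3) E)) := by
  simp only [Subgroup.coe_map, Set.image_image, piMat_blockMulDiag]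
  rfl

theorem rhoFun_image_map_blockMulDiag (P : Subgroup (Lb × Eˣ)) :
    rhoFun '' (P.map (blockMulDiag hLb) : Set (GL (Fin 3) E))
      = Units.val '' (P.map (MonoidHom.snd Lb Eˣ) : Set Eˣ) := by
  simp only [Subgroup.coe_map, Set.image_image, rhoFun_blockMulDiag]
  rfl

theorem comap_diagThird_map_blockMulDiag (P : Subgroup (Lb × Eˣ)) :
    (P.map (blockMulDiag hLb)).comap diagThird = P.comap (MonoidHom.inr Lb Eˣ) := by
  have h_inr : (blockMulDiag hLb).comp (MonoidHom.inr Lb Eˣ) = diagThird :=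
    MonoidHom.noncommCoprod_comp_inr _ _ _
  rw [← h_inr, ← Subgroup.comap_comap,
    Subgroup.comap_map_eq_self_of_injective (blockMulDiag_injective hLb)]

end BlockProduct

section ImageOfPi

theorem natCard_det_image {ι R : Type*} [Fintype ι] [DecidableEq ι] [CommRing R]
    (H : Subgroup (GL ι R)) :
    Nat.card ((fun N : GL ι R => (N : Matrix ι ι R).det) '' (H : Set (GL ι R)) : Set R)
      = Nat.card (H.map GeneralLinearGroup.det) := by
  calc
    _ = Nat.card (Units.val '' (GeneralLinearGroup.det '' (H : Set (GL ι R)))) := by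
      rw [Set.image_image]
      rfl
    _ = _ := Nat.card_image_of_injective Units.val_injective _

variable {E : Type*} [Field E] {q n m : ℕ} {F : Subfield E} {N : GL (Fin 3) E}

/-- The carrier of `M_ℓ = π(G)`, as a set of invertible matrices. -/
def MlSet (q n m : ℕ) (F : Subfield E) : Set (GL (Fin 3) E) :=
  {N | ∃ M ∈ GSet q n m F, (N : Matrix (Fin 3) (Fin 3) E) = piMat M}

theorem exists_eq_of_mem_MlSet (hN : N ∈ MlSet q n m F) :
    ∃ (a c : E) (ξ : Eˣ), a ∈ F ∧ c ∈ F ∧ a ^ (q + 1) - c ^ (q + 1) = 1 ∧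
      ξ ^ (q ^ n + 1) = 1 ∧ (N : Matrix (Fin 3) (Fin 3) E)
        = !![a, c ^ q * (ξ : E) ^ m, 0; c, a ^ q * (ξ : E) ^ m, 0; 0, 0, 1] := by
  obtain ⟨M, ⟨a, c, ξ, ha, hc, hac, hξ, hM⟩, hNM⟩ := hN
  lift ξ to Eˣ using IsUnit.of_pow_eq_one hξ (Nat.succ_ne_zero _)
  refine ⟨a, c, ξ, ha, hc, hac, Units.ext hξ, ?_⟩
  rw [hNM, piMat, hM]
  ext i j
  fin_cases i <;> fin_cases j <;> simp

theorem isBlockOne_of_mem_MlSet (hN : N ∈ MlSet q n m F) : IsBlockOne N := by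
  obtain ⟨a, c, ξ, -, -, -, -, hN⟩ := exists_eq_of_mem_MlSet hN
  exact ⟨a, _, c, _, hN⟩

theorem det_blockOne {R : Type*} [CommRing R] (a b c d : R) :
    !![a, b, 0; c, d, 0; 0, 0, 1].det = a * d - b * c := by
  simp [Matrix.det_fin_three]

theorem det_eq_pow {a c : E} {ξ : Eˣ} (hac : a ^ (q + 1) - c ^ (q + 1) = 1)
    (hN : (N : Matrix (Fin 3) (Fin 3) E)
      = !![a, c ^ q * (ξ : E) ^ m, 0; c, a ^ q * (ξ : E) ^ m, 0; 0, 0, 1]) :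
    GeneralLinearGroup.det N = ξ ^ m := by
  ext
  rw [GeneralLinearGroup.val_det_apply, hN, det_blockOne, Units.val_pow_eq_pow_val]
  linear_combination (ξ : E) ^ m * hac

theorem exists_pow_eq_det_of_mem_MlSet (hN : N ∈ MlSet q n m F) :
    ∃ ξ ∈ rootsOfUnity (q ^ n + 1) E, ξ ^ m = GeneralLinearGroup.det N := by
  obtain ⟨a, c, ξ, -, -, hac, hξ, hN⟩ := exists_eq_of_mem_MlSet hN
  exact ⟨ξ, hξ, (det_eq_pow hac hN).symm⟩

theorem mul_diagThird_mem_GSet (hm : m ∣ q ^ n + 1) (hN : N ∈ MlSet q n m F) {u : Eˣ}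
    (hu : u ^ m = GeneralLinearGroup.det N) : N * diagThird u ∈ GSet q n m F := by
  obtain ⟨a, c, ξ, ha, hc, hac, hξ, hN⟩ := exists_eq_of_mem_MlSet hN
  have hu_eq : u ^ m = ξ ^ m := hu.trans (det_eq_pow hac hN)
  have hu_one : u ^ (q ^ n + 1) = 1 := by
    obtain ⟨t, ht⟩ := hm
    rw [ht, pow_mul, hu_eq, ← pow_mul, ← ht, hξ]
  refine ⟨a, c, u, ha, hc, hac, congrArg Units.val hu_one, ?_⟩
  rw [← Units.val_pow_eq_pow_val, hu_eq, Units.val_mul, hN, coe_diagThird]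
  ext i j
  fin_cases i <;> fin_cases j <;> simp

theorem finite_map_det {Lb : Subgroup (GL (Fin 3) E)}
    (hLb : (Lb : Set (GL (Fin 3) E)) ⊆ MlSet q n m F) :
    Finite (Lb.map GeneralLinearGroup.det) := by
  have hle : Lb.map GeneralLinearGroup.det ≤ rootsOfUnity (q ^ n + 1) E := by
    rintro _ ⟨N, hN, rfl⟩
    obtain ⟨ξ, hξ, hξ_det⟩ := exists_pow_eq_det_of_mem_MlSet (hLb hN)
    exact hξ_det ▸ pow_mem hξ m
  exact finite_of_le_rootsOfUnity hle

end ImageOfPi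

theorem stmt3_general {q n m l : ℕ} (hm : m ∣ q ^ n + 1)
    {E : Type*} [Field E] {F : Subfield E}
    {Lb : Subgroup (GL (Fin 3) E)} (hLb : (Lb : Set (GL (Fin 3) E)) ⊆ MlSet q n m F)
    {s : ℕ} (hs : Nat.card ((fun N : GL (Fin 3) E => (N : Matrix (Fin 3) (Fin 3) E).det)
        '' (Lb : Set (GL (Fin 3) E)) : Set E) = s)
    (hl : l ∣ m) {ζ : Eˣ} (hζ : IsPrimitiveRoot ζ l) (hgcd : Nat.gcd s (m / l) = 1) :
    ∃ Lt : Subgroup (GL (Fin 3) E),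
      (Lt : Set (GL (Fin 3) E)) ⊆ GSet q n m F ∧
      piMat '' (Lt : Set (GL (Fin 3) E))
        = (fun N : GL (Fin 3) E => (N : Matrix (Fin 3) (Fin 3) E))
          '' (Lb : Set (GL (Fin 3) E)) ∧
      rhoFun '' (Lt : Set (GL (Fin 3) E)) = muSet (s * l) E ∧
      Nat.card ((Lt : Set (GL (Fin 3) E)) ∩ CmSet m : Set (GL (Fin 3) E)) = l := by
  have : NeZero m := ⟨ne_zero_of_dvd_ne_zero (Nat.succ_ne_zero _) hm⟩
  obtain ⟨k, rfl⟩ := hl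
  have : NeZero l := ⟨left_ne_zero_of_mul (NeZero.ne (l * k))⟩
  rw [Nat.mul_div_cancel_left k (NeZero.pos l)] at hgcd
  have := finite_map_det hLb
  have hs_card : Nat.card (Lb.map GeneralLinearGroup.det) = s :=
    (natCard_det_image Lb).symm.trans hs
  have : NeZero s := ⟨hs_card ▸ Nat.card_pos.ne'⟩
  have hd : (GeneralLinearGroup.det.domRestrict Lb).range = rootsOfUnity s E := by
    rw [MonoidHom.domRestrict_range, ← hs_card, ← eq_rootsOfUnity_natCard]
  have hblock : ∀ N ∈ Lb, IsBlockOne N := fun N hN => isBlockOne_of_mem_MlSet (hLb hN)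
  have hroot (N : Lb) : ∃ u, u ^ (l * k) = GeneralLinearGroup.det.domRestrict Lb N :=
    (exists_pow_eq_det_of_mem_MlSet (hLb N.2)).imp fun _ h => h.2
  refine ⟨(powFiberProd (GeneralLinearGroup.det.domRestrict Lb) (l * k) (s * l)).map
    (blockMulDiag hblock), ?_, ?_, ?_, ?_⟩
  · rintro _ ⟨⟨N, u⟩, ⟨hu, -⟩, rfl⟩
    exact mul_diagThird_mem_GSet hm (hLb N.2) hu
  · rw [piMat_image_map_blockMulDiag, map_fst_powFiberProd_eq_top hgcd hroot hd.le,
      ← MonoidHom.range_eq_map, Subgroup.range_subtype]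
  · rw [rhoFun_image_map_blockMulDiag, map_snd_powFiberProd hd.ge,
      Units.val_set_image_rootsOfUnity, muSet]
  · rw [natCard_inter_CmSet, comap_diagThird_map_blockMulDiag, comap_inr_powFiberProd _ hgcd,
      inf_eq_left.2 (rootsOfUnity_le_of_dvd (dvd_mul_right l k)), hζ.card_rootsOfUnity']

theorem stmt3 (p h n q m s lm : ℕ) (hp : p.Prime) (hh : 1 ≤ h) (hq : q = p ^ h)
    (hn1 : 1 ≤ n) (hodd : Odd n) (hm : m * (q + 1) = q ^ n + 1)
    {E : Type*} [Field E] [Fintype E] (hE : Fintype.card E = q ^ (2 * n))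
    (F : Subfield E) (hF : Nat.card F = q ^ 2)
    (Lb : Subgroup (GL (Fin 3) E))
    (hLb : ∀ N ∈ Lb, ∃ M ∈ GSet q n m F, (N : Matrix (Fin 3) (Fin 3) E) = piMat M)
    (hs : Nat.card ((fun N : GL (Fin 3) E => (N : Matrix (Fin 3) (Fin 3) E).det)
        '' (Lb : Set (GL (Fin 3) E)) : Set E) = s)
    (L : Subgroup (GL (Fin 3) E)) (hLG : (L : Set (GL (Fin 3) E)) ⊆ GSet q n m F)
    (hπL : piMat '' (L : Set (GL (Fin 3) E))
      = (fun N : GL (Fin 3) E => (N : Matrix (Fin 3) (Fin 3) E))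
        '' (Lb : Set (GL (Fin 3) E)))
    (hlm : Nat.card ((L : Set (GL (Fin 3) E)) ∩ CmSet m : Set (GL (Fin 3) E)) = lm)
    (hgcd : Nat.gcd s (m / lm) = 1) :
    ∃ Lt : Subgroup (GL (Fin 3) E),
      (Lt : Set (GL (Fin 3) E)) ⊆ GSet q n m F ∧
      piMat '' (Lt : Set (GL (Fin 3) E))
        = (fun N : GL (Fin 3) E => (N : Matrix (Fin 3) (Fin 3) E))
          '' (Lb : Set (GL (Fin 3) E)) ∧
      rhoFun '' (Lt : Set (GL (Fin 3) E)) = muSet (s * lm) E ∧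
      Nat.card ((Lt : Set (GL (Fin 3) E)) ∩ CmSet m : Set (GL (Fin 3) E)) = lm := by
  obtain ⟨hl, ζ, hζ⟩ := natCard_inter_CmSet_dvd_and_exists_isPrimitiveRoot
    (left_ne_zero_of_mul (hm.trans_ne (Nat.succ_ne_zero _))) L
  exact stmt3_general (Dvd.intro _ hm) hLb hs (hlm ▸ hl) (hlm ▸ hζ) hgcd
end
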